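/- arXiv:2601.16576 — 3 statements merged into one kernel-verified Lean document; each statement's English description precedes it below -/
import Mathlib

section
/- The optimal value function V on ℝ^{n×d} is globally Lipschitz continuous with respect to the Frobenius norm: |V(A) − V(B)| ≤ ‖F°‖ √n ‖A − B‖_F for all A, B ∈ ℝ^{n×d}. -/
open scoped BigOperators RealInnerProductSpace

noncomputable section

/-!
The gauge of a convex neighbourhood `F` of the origin is the support function of `F°`
(Hahn–Banach), so it is subadditive and at most `‖F°‖ * ‖·‖`, hence `‖F°‖`-Lipschitz. Infima
preserve uniform bounds: replacing `A` by `B` moves each cluster distance by at most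
`‖F°‖ * ‖A i - B i‖`, and the cost of any fixed `X` by at most the sum of these because the penalty
does not see the data. The infimum over `X` inherits this bound, and Cauchy–Schwarz turns the sum of
norms into `√n` times the Frobenius norm.
-/

open scoped Topology

section Infimum

variable {α : Sort*} {G : Type*} [Nonempty α] [AddCommGroup G] [ConditionallyCompleteLinearOrder G]
  [IsOrderedAddMonoid G] {f g : α → G} {c : G}

theorem ciInf_sub_ciInf_le (hf : BddBelow (Set.range f)) (h : ∀ x, f x - g x ≤ c) :
    (⨅ x, f x) - ⨅ x, g x ≤ c :=
  sub_le_comm.1 <| le_ciInf fun x => sub_le_comm.1 <|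
    (sub_le_sub_right (ciInf_le hf x) (g x)).trans (h x)

theorem abs_ciInf_sub_ciInf_le (hf : BddBelow (Set.range f)) (hg : BddBelow (Set.range g))
    (h : ∀ x, |f x - g x| ≤ c) : |(⨅ x, f x) - ⨅ x, g x| ≤ c :=
  abs_sub_le_iff.2 ⟨ciInf_sub_ciInf_le hf fun x => (abs_sub_le_iff.1 (h x)).1,
    ciInf_sub_ciInf_le hg fun x => (abs_sub_le_iff.1 (h x)).2⟩

end Infimum

section Polar

variable {E : Type*} [AddCommGroup E] [Module ℝ E] [TopologicalSpace E] {F : Set E}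

/-- The polar `F°` of a set in a real topological vector space, as a set of continuous
linear functionals. It is one-sided, unlike `StrongDual.polar`, which bounds `‖φ x‖`. -/
def dualPolar (F : Set E) : Set (StrongDual ℝ E) :=
  {φ | ∀ x ∈ F, φ x ≤ 1}

theorem dualPolar_subset_polar_inter_neg (F : Set E) :
    dualPolar F ⊆ StrongDual.polar ℝ (F ∩ -F) := by
  intro φ hφ
  rw [StrongDual.mem_polar_iff]
  rintro x ⟨hx, hnx⟩
  have hneg : -φ x ≤ 1 := by simpa using hφ (-x) hnx
  exact abs_le.2 ⟨neg_le.1 hneg, hφ x hx⟩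

variable [IsTopologicalAddGroup E] [ContinuousSMul ℝ E]

theorem mem_dualPolar_of_le_one_on_interior (hF : Convex ℝ F) (hF0 : F ∈ 𝓝 0)
    {φ : StrongDual ℝ E} (hφ : ∀ x ∈ interior F, φ x ≤ 1) : φ ∈ dualPolar F := by
  intro x hx
  have hne : (interior F).Nonempty := ⟨0, mem_interior_iff_mem_nhds.2 hF0⟩
  have hxcl : x ∈ closure (interior F) := by
    rw [hF.closure_interior_eq_closure_of_nonempty_interior hne]
    exact subset_closure hx
  exact closure_minimal hφ (isClosed_le φ.continuous continuous_const) hxcl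

theorem exists_mem_dualPolar_apply_eq_gauge (hF : Convex ℝ F) (hF0 : F ∈ 𝓝 0) (z : E) :
    ∃ φ ∈ dualPolar F, φ z = gauge F z := by
  rcases (gauge_nonneg z).eq_or_lt' with hz | hz
  · exact ⟨0, fun x _ => by simp, hz.symm⟩
  have hgauge : gauge F ((gauge F z)⁻¹ • z) = 1 := by
    rw [gauge_smul_of_nonneg (inv_nonneg.2 hz.le), smul_eq_mul, inv_mul_cancel₀ hz.ne']
  have hnot : (gauge F z)⁻¹ • z ∉ interior F := fun hmem =>
    ((gauge_lt_one_iff_mem_interior hF hF0).2 hmem).ne hgauge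
  obtain ⟨φ, hφz, hφ⟩ := separate_convex_open_set (mem_interior_iff_mem_nhds.2 hF0)
    hF.interior isOpen_interior hnot
  refine ⟨φ, mem_dualPolar_of_le_one_on_interior hF hF0 fun x hx => (hφ x hx).le, ?_⟩
  rwa [map_smul, smul_eq_mul, inv_mul_eq_one₀ hz.ne', eq_comm] at hφz

end Polar

section PolarRadius

variable {E : Type*} [SeminormedAddCommGroup E] [NormedSpace ℝ E] {F : Set E}

/-- The radius `‖F°‖` of the polar: the supremum of the norms of the functionals in
`dualPolar F`. It is the junk value `0` when the polar is unbounded, which does not happen for a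
neighbourhood of the origin. -/
def polarRadius (F : Set E) : ℝ :=
  sSup (norm '' dualPolar F)

theorem polarRadius_nonneg (F : Set E) : 0 ≤ polarRadius F :=
  Real.sSup_nonneg <| Set.forall_mem_image.2 fun φ _ => norm_nonneg φ

theorem isBounded_dualPolar (hF0 : F ∈ 𝓝 0) : Bornology.IsBounded (dualPolar F) := by
  have hneg : -F ∈ 𝓝 (0 : E) := neg_mem_nhds_zero E hF0
  exact (NormedSpace.isBounded_polar_of_mem_nhds_zero ℝ (Filter.inter_mem hF0 hneg)).subset
    (dualPolar_subset_polar_inter_neg F)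

theorem norm_le_polarRadius (hF0 : F ∈ 𝓝 0) {φ : StrongDual ℝ E} (hφ : φ ∈ dualPolar F) :
    ‖φ‖ ≤ polarRadius F := by
  obtain ⟨C, hC⟩ := (isBounded_dualPolar hF0).exists_norm_le
  exact le_csSup ⟨C, Set.forall_mem_image.2 hC⟩ (Set.mem_image_of_mem _ hφ)

theorem gauge_le_polarRadius_mul_norm (hF : Convex ℝ F) (hF0 : F ∈ 𝓝 0) (z : E) :
    gauge F z ≤ polarRadius F * ‖z‖ := by
  obtain ⟨φ, hφ, hφz⟩ := exists_mem_dualPolar_apply_eq_gauge hF hF0 z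
  calc gauge F z = φ z := hφz.symm
    _ ≤ ‖φ z‖ := Real.le_norm_self _
    _ ≤ polarRadius F * ‖z‖ := φ.le_of_opNorm_le (norm_le_polarRadius hF0 hφ) z

theorem gauge_sub_gauge_le (hF : Convex ℝ F) (hF0 : F ∈ 𝓝 0) (x y : E) :
    gauge F x - gauge F y ≤ polarRadius F * ‖x - y‖ := by
  have htri : gauge F x ≤ gauge F (x - y) + gauge F y := by
    simpa using gauge_add_le hF (absorbent_nhds_zero hF0) (x - y) y
  linarith [gauge_le_polarRadius_mul_norm hF hF0 (x - y)]

theorem abs_gauge_sub_gauge_le (hF : Convex ℝ F) (hF0 : F ∈ 𝓝 0) (x y : E) :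
    |gauge F x - gauge F y| ≤ polarRadius F * ‖x - y‖ :=
  abs_sub_le_iff.2 ⟨gauge_sub_gauge_le hF hF0 x y,
    norm_sub_rev x y ▸ gauge_sub_gauge_le hF hF0 y x⟩

end PolarRadius

theorem polarRadius_eq_sSup_inner {H : Type*} [NormedAddCommGroup H] [InnerProductSpace ℝ H]
    [CompleteSpace H] (F : Set H) :
    polarRadius F = sSup ((fun v : H => ‖v‖) '' {v | ∀ x ∈ F, ⟪v, x⟫ ≤ 1}) := by
  have himage : dualPolar F = InnerProductSpace.toDual ℝ H '' {v | ∀ x ∈ F, ⟪v, x⟫ ≤ 1} := by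
    rw [LinearIsometryEquiv.image_eq_preimage_symm]
    ext φ
    simp [dualPolar]
  simp only [polarRadius, himage, Set.image_image, LinearIsometryEquiv.norm_map]

section Cost

variable {E ι κ : Type*} [AddCommGroup E] [Module ℝ E]

/-- The gauge distance from the nearest of the centres `X ℓ` to the data point `a`.
It is the junk value `0` when there are no centres. -/
def clusterDist (F : Set E) (X : κ → E) (a : E) : ℝ :=
  ⨅ ℓ, gauge F (X ℓ - a)

/-- The clustering cost of the centres `X` for the data `A`: the sum of the distances of the data
points to their nearest centres, plus a penalty `R X` on the centres alone. -/
def clusterCost [Fintype ι] (F : Set E) (R : (κ → E) → ℝ) (X : κ → E) (A : ι → E) : ℝ :=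
  ∑ i, clusterDist F X (A i) + R X

theorem clusterDist_nonneg (F : Set E) (X : κ → E) (a : E) : 0 ≤ clusterDist F X a :=
  Real.iInf_nonneg fun _ => gauge_nonneg _

theorem bddBelow_range_clusterCost [Fintype ι] (F : Set E) {R : (κ → E) → ℝ}
    (hR : BddBelow (Set.range R)) (A : ι → E) :
    BddBelow (Set.range fun X => clusterCost F R X A) := by
  obtain ⟨m, hm⟩ := hR
  refine ⟨m, Set.forall_mem_range.2 fun X => ?_⟩
  have hsum : 0 ≤ ∑ i, clusterDist F X (A i) :=
    Finset.sum_nonneg fun i _ => clusterDist_nonneg F X (A i)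
  exact le_add_of_nonneg_of_le hsum (hm (Set.mem_range_self X))

end Cost

section Lipschitz

variable {E ι κ : Type*} [SeminormedAddCommGroup E] [NormedSpace ℝ E] [Nonempty κ] {F : Set E}

theorem abs_clusterDist_sub_le (hF : Convex ℝ F) (hF0 : F ∈ 𝓝 0) (X : κ → E) (a b : E) :
    |clusterDist F X a - clusterDist F X b| ≤ polarRadius F * ‖a - b‖ := by
  have hbdd (c : E) : BddBelow (Set.range fun ℓ => gauge F (X ℓ - c)) :=
    ⟨0, Set.forall_mem_range.2 fun _ => gauge_nonneg _⟩
  refine abs_ciInf_sub_ciInf_le (hbdd a) (hbdd b) fun ℓ => ?_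
  simpa [norm_sub_rev] using abs_gauge_sub_gauge_le hF hF0 (X ℓ - a) (X ℓ - b)

theorem abs_clusterCost_sub_le [Fintype ι] (hF : Convex ℝ F) (hF0 : F ∈ 𝓝 0)
    (R : (κ → E) → ℝ) (X : κ → E) (A B : ι → E) :
    |clusterCost F R X A - clusterCost F R X B| ≤ polarRadius F * ∑ i, ‖A i - B i‖ := by
  calc |clusterCost F R X A - clusterCost F R X B|
      = |∑ i, (clusterDist F X (A i) - clusterDist F X (B i))| := by
        rw [clusterCost, clusterCost, add_sub_add_right_eq_sub, Finset.sum_sub_distrib]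
    _ ≤ ∑ i, |clusterDist F X (A i) - clusterDist F X (B i)| := Finset.abs_sum_le_sum_abs _ _
    _ ≤ ∑ i, polarRadius F * ‖A i - B i‖ :=
        Finset.sum_le_sum fun i _ => abs_clusterDist_sub_le hF hF0 X (A i) (B i)
    _ = polarRadius F * ∑ i, ‖A i - B i‖ := (Finset.mul_sum _ _ _).symm

theorem optimal_value_lipschitz_general [Fintype ι] (hF : Convex ℝ F) (hF0 : F ∈ 𝓝 0)
    {R : (κ → E) → ℝ} (hR : BddBelow (Set.range R)) (A B : ι → E) :
    |(⨅ X, clusterCost F R X A) - ⨅ X, clusterCost F R X B| ≤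
      polarRadius F * √(Fintype.card ι) * √(∑ i, ‖A i - B i‖ ^ 2) := by
  have hcauchy : ∑ i, ‖A i - B i‖ ≤ √(Fintype.card ι) * √(∑ i, ‖A i - B i‖ ^ 2) := by
    simpa using Real.sum_mul_le_sqrt_mul_sqrt Finset.univ (fun _ => 1) fun i => ‖A i - B i‖
  calc |(⨅ X, clusterCost F R X A) - ⨅ X, clusterCost F R X B|
      ≤ polarRadius F * ∑ i, ‖A i - B i‖ :=
        abs_ciInf_sub_ciInf_le (bddBelow_range_clusterCost F hR A)
          (bddBelow_range_clusterCost F hR B) fun X => abs_clusterCost_sub_le hF hF0 R X A B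
    _ ≤ polarRadius F * (√(Fintype.card ι) * √(∑ i, ‖A i - B i‖ ^ 2)) :=
        mul_le_mul_of_nonneg_left hcauchy (polarRadius_nonneg F)
    _ = polarRadius F * √(Fintype.card ι) * √(∑ i, ‖A i - B i‖ ^ 2) := (mul_assoc _ _ _).symm

end Lipschitz

/-- The optimal value function `V(A) = inf_X f(X; A)` is globally Lipschitz
with constant `‖F°‖ √n` with respect to the Frobenius norm on the data. -/
theorem optimal_value_lipschitz
    (d n k : ℕ) (hn : 0 < n) (hk : 0 < k)
    (F : Set (EuclideanSpace ℝ (Fin d)))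
    (hFcomp : IsCompact F) (hFconv : Convex ℝ F)
    (hF0 : (0 : EuclideanSpace ℝ (Fin d)) ∈ interior F)
    (polar : Set (EuclideanSpace ℝ (Fin d)))
    (hpolar : polar = {v : EuclideanSpace ℝ (Fin d) | ∀ x ∈ F, ⟪v, x⟫ ≤ 1})
    (normPolar : ℝ)
    (hnormPolar : normPolar = sSup ((fun v : EuclideanSpace ℝ (Fin d) => ‖v‖) '' polar))
    (lam : ℝ) (hlam : 0 < lam)
    (f : (Fin k → EuclideanSpace ℝ (Fin d)) → (Fin n → EuclideanSpace ℝ (Fin d)) → ℝ)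
    (hf : ∀ X A, f X A = (∑ i : Fin n, ⨅ ℓ : Fin k, gauge F (X ℓ - A i))
        + lam * n / 2 * ∑ s : Fin k, ∑ t : Fin k, (if s < t then ‖X s - X t‖ ^ 2 else 0))
    (V : (Fin n → EuclideanSpace ℝ (Fin d)) → ℝ)
    (hV : ∀ A, V A = ⨅ X : Fin k → EuclideanSpace ℝ (Fin d), f X A)
    (A B : Fin n → EuclideanSpace ℝ (Fin d)) :
    |V A - V B| ≤ normPolar * Real.sqrt n * Real.sqrt (∑ i : Fin n, ‖A i - B i‖ ^ 2) := by
  have : Nonempty (Fin k) := ⟨⟨0, hk⟩⟩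
  have hpenalty : BddBelow (Set.range fun X : Fin k → EuclideanSpace ℝ (Fin d) =>
      lam * n / 2 * ∑ s : Fin k, ∑ t : Fin k, (if s < t then ‖X s - X t‖ ^ 2 else 0)) :=
    ⟨0, Set.forall_mem_range.2 fun X => by positivity⟩
  have hradius : normPolar = polarRadius F := by
    rw [hnormPolar, hpolar, polarRadius_eq_sSup_inner]
  simpa only [hV, hf, clusterCost, clusterDist, hradius, Fintype.card_fin] using
    optimal_value_lipschitz_general hFconv (mem_interior_iff_mem_nhds.1 hF0) hpenalty A B
end
end

section
/- The global optimal solution mapping S : ℝ^{n×d} ⇉ ℝ^{k×d}, S(A) = {X̄ ∈ ℝ^{k×d} : f(X̄; A) = V(A)}, is upper semicontinuous at every point: for every Ā ∈ ℝ^{n×d} and every open set U ⊆ ℝ^{k×d} with S(Ā) ⊆ U, there exists an open neighborhood V of Ā in ℝ^{n×d} such that S(A) ⊆ U for all A ∈ V. -/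
open scoped BigOperators

noncomputable section

/-!
For a jointly continuous objective the pairs `(A, X)` with `X` a global minimizer of `f(·; A)` form
a closed set, because minimality is an intersection of closed conditions `f(X; A) ≤ f(Y; A)`. A
set-valued map with closed graph is upper semicontinuous wherever its values nearby stay in one
compact set. Here they do: comparing with `X = 0` bounds the optimal value near `Ā`, so some centre
is close to a given data point since the gauge is coercive, and the quadratic penalty keeps the
remaining centres close to that one.
-/

section Minimizers

open Topology

variable {P X β : Type*}

/-- The global minimizers of the member `f p` of a parametric family of functions, as a set-valued
map of the parameter `p`. -/
def minimizers [LE β] (f : P → X → β) (p : P) : Set X :=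
  {x | ∀ y, f p x ≤ f p y}

theorem eq_ciInf_iff_forall_le [ConditionallyCompleteLattice β] {g : X → β}
    (hg : BddBelow (Set.range g)) {x : X} : g x = ⨅ y, g y ↔ ∀ y, g x ≤ g y := by
  have : Nonempty X := ⟨x⟩
  exact ⟨fun h y => h.trans_le (ciInf_le hg y), fun h => (le_ciInf h).antisymm (ciInf_le hg x)⟩

variable [TopologicalSpace P] [TopologicalSpace X]

theorem isClosed_graph_minimizers [Preorder β] [TopologicalSpace β] [OrderClosedTopology β]
    {f : P → X → β} (hf : Continuous f.uncurry) :
    IsClosed {q : P × X | q.2 ∈ minimizers f q.1} := by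
  have hgraph : {q : P × X | q.2 ∈ minimizers f q.1} = ⋂ y, {q | f q.1 q.2 ≤ f q.1 y} := by
    ext q
    simp only [minimizers, Set.mem_ofPred_eq, Set.mem_iInter]
  rw [hgraph]
  exact isClosed_iInter fun y =>
    isClosed_le hf (hf.comp (continuous_fst.prodMk continuous_const))

theorem upperHemicontinuousAt_of_isClosed_graph {S : P → Set X} {p₀ : P} {K : Set X}
    (hgraph : IsClosed {q : P × X | q.2 ∈ S q.1}) (hK : IsCompact K)
    (hSK : ∀ᶠ p in 𝓝 p₀, S p ⊆ K) : UpperHemicontinuousAt S p₀ := by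
  rw [upperHemicontinuousAt_iff_forall_isOpen]
  intro U hU hSU
  have h_avoid : ∀ᶠ p in 𝓝 p₀, ∀ x ∈ K \ U, x ∉ S p :=
    (hK.diff hU).eventually_forall_of_forall_eventually fun x hx =>
      hgraph.isOpen_compl.mem_nhds fun hxS => hx.2 (hSU hxS)
  filter_upwards [hSK, h_avoid] with p hpK hp x hxS
  by_contra hxU
  exact hp x ⟨hpK hxS, hxU⟩ hxS

end Minimizers

theorem tendsto_gauge_cobounded_atTop {E : Type*} [NormedAddCommGroup E] [NormedSpace ℝ E]
    {s : Set E} (hs : Absorbent ℝ s) (hb : Bornology.IsBounded s) :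
    Filter.Tendsto (gauge s) (Bornology.cobounded E) Filter.atTop := by
  obtain ⟨r, hr, hsr⟩ := hb.subset_closedBall_lt 0 0
  exact Filter.tendsto_atTop_mono (fun _ => le_gauge_of_subset_closedBall hs hr.le hsr)
    (tendsto_norm_cobounded_atTop.atTop_div_const hr)

section AssignmentCost

variable {E ι κ : Type*} [Sub E] [Fintype ι] {ρ : E → ℝ}

/-- The total cost of assigning every data point `A i` to its cheapest centre `X ℓ`, where
serving a displacement `v` costs `ρ v`. -/
def assignmentCost (ρ : E → ℝ) (A : ι → E) (X : κ → E) : ℝ :=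
  ∑ i, ⨅ ℓ, ρ (X ℓ - A i)

theorem assignmentCost_nonneg (hρ : 0 ≤ ρ) (A : ι → E) (X : κ → E) : 0 ≤ assignmentCost ρ A X :=
  Finset.sum_nonneg fun _ _ => Real.iInf_nonneg fun _ => hρ _

theorem exists_le_assignmentCost [Finite κ] [Nonempty κ] (hρ : 0 ≤ ρ) (A : ι → E)
    (X : κ → E) (i : ι) : ∃ ℓ, ρ (X ℓ - A i) ≤ assignmentCost ρ A X := by
  obtain ⟨ℓ, hℓ⟩ := exists_eq_ciInf_of_finite (f := fun ℓ => ρ (X ℓ - A i))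
  refine ⟨ℓ, hℓ.trans_le ?_⟩
  exact Finset.single_le_sum (f := fun i => ⨅ ℓ, ρ (X ℓ - A i))
    (fun _ _ => Real.iInf_nonneg fun _ => hρ _) (Finset.mem_univ i)

theorem continuous_assignmentCost [TopologicalSpace E] [ContinuousSub E] [Finite κ] [Nonempty κ]
    (hρ : Continuous ρ) :
    Continuous (assignmentCost ρ : (ι → E) → (κ → E) → ℝ).uncurry := by
  cases nonempty_fintype κ
  simp only [Function.uncurry_def, assignmentCost, ← Finset.inf'_univ_eq_ciInf]
  exact continuous_finsetSum _ fun i _ => Continuous.finset_inf'_apply _ fun ℓ _ =>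
    hρ.comp (by fun_prop)

end AssignmentCost

section Objective

open Filter Topology

variable {E ι κ : Type*} [SeminormedAddCommGroup E] [Fintype κ] [LinearOrder κ]

/-- The sum of the squared distances between the centres, each unordered pair counted once. -/
def dispersion (X : κ → E) : ℝ :=
  ∑ s, ∑ t, if s < t then ‖X s - X t‖ ^ 2 else 0

theorem dispersion_nonneg (X : κ → E) : 0 ≤ dispersion X :=
  Finset.sum_nonneg fun s _ => Finset.sum_nonneg fun t _ => by split_ifs <;> positivity

theorem norm_sub_sq_le_dispersion (X : κ → E) (s t : κ) : ‖X s - X t‖ ^ 2 ≤ dispersion X := by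
  wlog hst : s < t generalizing s t
  · rcases (not_lt.mp hst).eq_or_lt with rfl | hts
    · simpa using dispersion_nonneg X
    · simpa only [norm_sub_rev] using this t s hts
  have hterm (a b : κ) : 0 ≤ if a < b then ‖X a - X b‖ ^ 2 else 0 := by split_ifs <;> positivity
  calc ‖X s - X t‖ ^ 2 = if s < t then ‖X s - X t‖ ^ 2 else 0 := (if_pos hst).symm
    _ ≤ ∑ b, if s < b then ‖X s - X b‖ ^ 2 else 0 :=
      Finset.single_le_sum (fun b _ => hterm s b) (Finset.mem_univ t)
    _ ≤ dispersion X :=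
      Finset.single_le_sum (f := fun a => ∑ b, if a < b then ‖X a - X b‖ ^ 2 else 0)
        (fun a _ => Finset.sum_nonneg fun b _ => hterm a b) (Finset.mem_univ s)

theorem continuous_dispersion : Continuous (dispersion : (κ → E) → ℝ) := by
  refine continuous_finsetSum _ fun s _ => continuous_finsetSum _ fun t _ => ?_
  split_ifs <;> fun_prop

variable [Fintype ι] {ρ : E → ℝ} {c C : ℝ}

/-- The penalized clustering objective; the paper's `f(X; A)` has `ρ = gauge F` and
`c = λ n / 2`. -/
def clusteringObjective (ρ : E → ℝ) (c : ℝ) (A : ι → E) (X : κ → E) : ℝ :=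
  assignmentCost ρ A X + c * dispersion X

/-- The global optimal solution mapping `A ↦ S(A)`: the centres at which the clustering objective
equals its optimal value. -/
def solutionMapping (κ : Type*) [Fintype κ] [LinearOrder κ] (ρ : E → ℝ) (c : ℝ)
    (A : ι → E) : Set (κ → E) :=
  {X | clusteringObjective ρ c A X = ⨅ Y : κ → E, clusteringObjective ρ c A Y}

theorem clusteringObjective_nonneg (hρ : 0 ≤ ρ) (hc : 0 ≤ c) (A : ι → E) (X : κ → E) :
    0 ≤ clusteringObjective ρ c A X :=
  add_nonneg (assignmentCost_nonneg hρ A X) (mul_nonneg hc (dispersion_nonneg X))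

theorem continuous_clusteringObjective [Nonempty κ] (hρ : Continuous ρ) (c : ℝ) :
    Continuous (clusteringObjective ρ c : (ι → E) → (κ → E) → ℝ).uncurry :=
  (continuous_assignmentCost hρ).add
    (continuous_const.mul (continuous_dispersion.comp continuous_snd))

theorem norm_sub_le_sqrt_of_clusteringObjective_le (hρ : 0 ≤ ρ) (hc : 0 < c) {A : ι → E}
    {X : κ → E} (h : clusteringObjective ρ c A X ≤ C) (s t : κ) : ‖X s - X t‖ ≤ √(C / c) := by
  refine Real.le_sqrt_of_sq_le ((norm_sub_sq_le_dispersion X s t).trans ?_)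
  rw [le_div_iff₀' hc]
  exact (le_add_of_nonneg_left (assignmentCost_nonneg hρ A X)).trans h

theorem exists_le_of_clusteringObjective_le [Nonempty κ] (hρ : 0 ≤ ρ) (hc : 0 ≤ c) {A : ι → E}
    {X : κ → E} (h : clusteringObjective ρ c A X ≤ C) (i : ι) : ∃ ℓ, ρ (X ℓ - A i) ≤ C := by
  obtain ⟨ℓ, hℓ⟩ := exists_le_assignmentCost hρ A X i
  exact ⟨ℓ, hℓ.trans ((le_add_of_nonneg_right (mul_nonneg hc (dispersion_nonneg X))).trans h)⟩

theorem exists_norm_le_add_of_clusteringObjective_le [Nonempty ι] [Nonempty κ] (hρ : 0 ≤ ρ)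
    (hρ_coercive : Tendsto ρ (Bornology.cobounded E) atTop) (hc : 0 < c) (C : ℝ) :
    ∃ R, ∀ (A : ι → E) (X : κ → E), clusteringObjective ρ c A X ≤ C → ‖X‖ ≤ R + ‖A‖ := by
  obtain ⟨r, -, hr⟩ := hasBasis_cobounded_norm.eventually_iff.mp (hρ_coercive.eventually_gt_atTop C)
  have hρ_bound (v : E) (hv : ρ v ≤ C) : ‖v‖ ≤ r :=
    (not_le.mp fun h => (hr h).not_ge hv).le
  refine ⟨√(C / c) + r, fun A X h => (pi_norm_le_iff_of_nonempty _).mpr fun s => ?_⟩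
  obtain ⟨i⟩ := ‹Nonempty ι›
  obtain ⟨ℓ, hℓ⟩ := exists_le_of_clusteringObjective_le hρ hc.le h i
  calc ‖X s‖ = ‖(X s - X ℓ) + (X ℓ - A i) + A i‖ := by congr 1; abel
    _ ≤ ‖X s - X ℓ‖ + ‖X ℓ - A i‖ + ‖A i‖ := norm_add₃_le
    _ ≤ √(C / c) + r + ‖A‖ := by
      gcongr
      exacts [norm_sub_le_sqrt_of_clusteringObjective_le hρ hc h s ℓ, hρ_bound _ hℓ,
        norm_le_pi_norm A i]

theorem solutionMapping_eq_minimizers (hρ : 0 ≤ ρ) (hc : 0 ≤ c) :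
    solutionMapping (ι := ι) κ ρ c = minimizers (clusteringObjective ρ c) := by
  funext A
  ext X
  exact eq_ciInf_iff_forall_le
    ⟨0, Set.forall_mem_range.mpr fun Y => clusteringObjective_nonneg hρ hc A Y⟩

theorem exists_eventually_minimizers_subset_closedBall [Nonempty ι] [Nonempty κ]
    (hρ_cont : Continuous ρ) (hρ : 0 ≤ ρ)
    (hρ_coercive : Tendsto ρ (Bornology.cobounded E) atTop) (hc : 0 < c) (A₀ : ι → E) :
    ∃ R, ∀ᶠ A in 𝓝 A₀,
      minimizers (clusteringObjective ρ c) A ⊆ Metric.closedBall (0 : κ → E) R := by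
  obtain ⟨R, hR⟩ := exists_norm_le_add_of_clusteringObjective_le (ι := ι) (κ := κ) hρ hρ_coercive hc
    (clusteringObjective ρ c A₀ (0 : κ → E) + 1)
  have h_value : ∀ᶠ A in 𝓝 A₀, clusteringObjective ρ c A (0 : κ → E) <
      clusteringObjective ρ c A₀ (0 : κ → E) + 1 :=
    ((continuous_clusteringObjective hρ_cont c).comp
      (Continuous.prodMk_left (0 : κ → E))).tendsto A₀ |>.eventually_lt_const (lt_add_one _)
  have h_norm : ∀ᶠ A in 𝓝 A₀, ‖A‖ < ‖A₀‖ + 1 :=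
    (continuous_norm.tendsto A₀).eventually_lt_const (lt_add_one _)
  refine ⟨R + (‖A₀‖ + 1), ?_⟩
  filter_upwards [h_value, h_norm] with A hA_value hA_norm X hX
  rw [mem_closedBall_zero_iff]
  exact (hR A X ((hX 0).trans hA_value.le)).trans (by gcongr)

theorem solution_mapping_upper_semicontinuous_general [ProperSpace E] [Nonempty ι] [Nonempty κ]
    (hρ_cont : Continuous ρ) (hρ : 0 ≤ ρ)
    (hρ_coercive : Tendsto ρ (Bornology.cobounded E) atTop) (hc : 0 < c) :
    UpperHemicontinuous (solutionMapping (ι := ι) κ ρ c) := by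
  rw [solutionMapping_eq_minimizers hρ hc.le]
  intro A₀
  obtain ⟨R, hR⟩ :=
    exists_eventually_minimizers_subset_closedBall (κ := κ) hρ_cont hρ hρ_coercive hc A₀
  exact upperHemicontinuousAt_of_isClosed_graph
    (isClosed_graph_minimizers (continuous_clusteringObjective hρ_cont c))
    (isCompact_closedBall 0 R) hR

end Objective

/-- The global optimal solution mapping `S(A) = {X̄ | f(X̄; A) = V(A)}` is
upper semicontinuous: for every `Ā` and every open `U ⊇ S(Ā)` there is an open neighborhood
`W` of `Ā` with `S(A) ⊆ U` for all `A ∈ W`. -/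
theorem solution_mapping_upper_semicontinuous
    (d n k : ℕ) (hn : 0 < n) (hk : 0 < k)
    (F : Set (EuclideanSpace ℝ (Fin d)))
    (hFcomp : IsCompact F) (hFconv : Convex ℝ F)
    (hF0 : (0 : EuclideanSpace ℝ (Fin d)) ∈ interior F)
    (lam : ℝ) (hlam : 0 < lam)
    (f : (Fin k → EuclideanSpace ℝ (Fin d)) → (Fin n → EuclideanSpace ℝ (Fin d)) → ℝ)
    (hf : ∀ X A, f X A = (∑ i : Fin n, ⨅ ℓ : Fin k, gauge F (X ℓ - A i))
        + lam * n / 2 * ∑ s : Fin k, ∑ t : Fin k, (if s < t then ‖X s - X t‖ ^ 2 else 0))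
    (V : (Fin n → EuclideanSpace ℝ (Fin d)) → ℝ)
    (hV : ∀ A, V A = ⨅ X : Fin k → EuclideanSpace ℝ (Fin d), f X A)
    (S : (Fin n → EuclideanSpace ℝ (Fin d)) → Set (Fin k → EuclideanSpace ℝ (Fin d)))
    (hS : ∀ A, S A = {Xb | f Xb A = V A})
    (Ab : Fin n → EuclideanSpace ℝ (Fin d))
    (U : Set (Fin k → EuclideanSpace ℝ (Fin d))) (hU : IsOpen U) (hSU : S Ab ⊆ U) :
    ∃ W : Set (Fin n → EuclideanSpace ℝ (Fin d)),
      IsOpen W ∧ Ab ∈ W ∧ ∀ A ∈ W, S A ⊆ U := by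
  have : Nonempty (Fin n) := ⟨⟨0, hn⟩⟩
  have : Nonempty (Fin k) := ⟨⟨0, hk⟩⟩
  have hF : F ∈ nhds 0 := mem_interior_iff_mem_nhds.mp hF0
  have h_usc : UpperHemicontinuous (solutionMapping (ι := Fin n) (Fin k) (gauge F) (lam * n / 2)) :=
    solution_mapping_upper_semicontinuous_general (continuous_gauge hFconv hF)
      (fun x => gauge_nonneg x)
      (tendsto_gauge_cobounded_atTop (absorbent_nhds_zero hF) hFcomp.isBounded) (by positivity)
  have hS_eq : S = solutionMapping (Fin k) (gauge F) (lam * n / 2) := by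
    funext A
    simp only [hS, hV, hf]
    rfl
  rw [← hS_eq] at h_usc
  obtain ⟨W, hW, hW_open, hAb⟩ := eventually_nhds_iff.mp
    (upperHemicontinuousAt_iff_forall_isOpen.mp (h_usc Ab) U hU hSU)
  exact ⟨W, hW_open, hAb, hW⟩
end
end

section
/- Accumulation points of the DCA iteration are critical points: let (X^{(t)})_{t≥0} be a sequence in ℝ^{k×d} and (Y^{(t)}) a sequence such that for every t, Y^{(t)} is a subgradient of h_μ at X^{(t)} and ∇g_μ(X^{(t+1)}) = Y^{(t)}. If X* is an accumulation point of (X^{(t)}) along a subsequence (t_j) with X^{(t_j)} → X* and ‖X^{(t_j+1)} − X^{(t_j)}‖_F → 0, then ∇g_μ(X*) is a subgradient of h_μ at X*. -/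
open scoped BigOperators RealInnerProductSpace

noncomputable section

/-!
The graph of the subdifferential of a lower semicontinuous function is closed, so the inclusions
`∇g (X (t + 1)) ∈ ∂h (X t)` pass to the limit once `∇g` is continuous and consecutive iterates
merge. Completing the square gives `ρ_μ z = ‖z‖² / (2μ) - (μ/2) d(z/μ, P)²` for the smoothed
support function of any nonempty set `P`, and this makes `h_μ` continuous.
-/

open Filter Topology

section Subgradient

variable {V : Type*} [NormedAddCommGroup V] [InnerProductSpace ℝ V]

/-- `y` is a subgradient of `h` at `x`, written `y ∈ ∂h x`. -/
def IsSubgradientAt (h : V → ℝ) (y x : V) : Prop :=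
  ∀ z, h x + ⟪y, z - x⟫ ≤ h z

theorem IsSubgradientAt.of_tendsto {β : Type*} {l : Filter β} [l.NeBot] {h : V → ℝ} {x y : V}
    {u v : β → V} (hh : LowerSemicontinuousAt h x) (hu : Tendsto u l (𝓝 x))
    (hv : Tendsto v l (𝓝 y)) (hsub : ∀ᶠ b in l, IsSubgradientAt h (v b) (u b)) :
    IsSubgradientAt h y x := by
  intro z
  have hlim : Tendsto (fun b ↦ h z - ⟪v b, z - u b⟫) l (𝓝 (h z - ⟪y, z - x⟫)) :=
    tendsto_const_nhds.sub (hv.inner (tendsto_const_nhds.sub hu))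
  suffices h x ≤ h z - ⟪y, z - x⟫ by linarith
  refine le_of_forall_lt_imp_le_of_dense fun c hc ↦ ge_of_tendsto hlim ?_
  filter_upwards [hu.eventually (hh c hc), hsub] with b hcb hb
  linarith [hb z]

theorem isSubgradientAt_gradient_of_tendsto [CompleteSpace V] {β : Type*} {l : Filter β}
    [l.NeBot] {g h : V → ℝ} {x : V} {u u' : β → V} (hg : ContinuousAt (gradient g) x)
    (hh : LowerSemicontinuousAt h x) (hu : Tendsto u l (𝓝 x))
    (hstep : Tendsto (fun b ↦ ‖u' b - u b‖) l (𝓝 0))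
    (hsub : ∀ᶠ b in l, IsSubgradientAt h (gradient g (u' b)) (u b)) :
    IsSubgradientAt h (gradient g x) x := by
  have hu' : Tendsto u' l (𝓝 x) := by
    simpa using (tendsto_zero_iff_norm_tendsto_zero.2 hstep).add hu
  exact .of_tendsto hh hu (hg.tendsto.comp hu') hsub

theorem continuous_gradient_of_contDiff [CompleteSpace V] {g : V → ℝ} (hg : ContDiff ℝ 1 g) :
    Continuous (gradient g) :=
  (InnerProductSpace.toDual ℝ V).symm.continuous.comp (hg.continuous_fderiv one_ne_zero)

end Subgradient

section SmoothedSupport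

variable {E : Type*} [NormedAddCommGroup E] [InnerProductSpace ℝ E] {P : Set E} {μ : ℝ}

/-- Nesterov's smoothing `ρ_μ` of the support function of `P`; for `P = F°` it smooths the gauge of
`F`. The supremum ranges over the subtype `P`, since a nested `⨆ y ∈ P` of reals would also take
into account the value `0` for each `y ∉ P`. -/
def smoothedSupport (P : Set E) (μ : ℝ) (z : E) : ℝ :=
  ⨆ y : P, (⟪z, (y : E)⟫ - μ / 2 * ‖(y : E)‖ ^ 2)

theorem inner_sub_half_mul_norm_sq_eq_sub_dist_sq (hμ : μ ≠ 0) (z y : E) :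
    ⟪z, y⟫ - μ / 2 * ‖y‖ ^ 2 = ‖z‖ ^ 2 / (2 * μ) - μ / 2 * dist (μ⁻¹ • z) y ^ 2 := by
  rw [dist_eq_norm, norm_sub_sq_real, real_inner_smul_left, norm_smul, Real.norm_eq_abs, mul_pow,
    sq_abs]
  field_simp
  ring

theorem isLUB_range_inner_sub_half_mul_norm_sq (hP : P.Nonempty) (hμ : 0 < μ) (z : E) :
    IsLUB (Set.range fun y : P ↦ ⟪z, (y : E)⟫ - μ / 2 * ‖(y : E)‖ ^ 2)
      (‖z‖ ^ 2 / (2 * μ) - μ / 2 * Metric.infDist (μ⁻¹ • z) P ^ 2) := by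
  let f (t : ℝ) : ℝ := ‖z‖ ^ 2 / (2 * μ) - μ / 2 * t ^ 2
  have hf : AntitoneOn f ((dist (μ⁻¹ • z) ·) '' P) := by
    rintro _ ⟨y, -, rfl⟩ t - (hyt : dist (μ⁻¹ • z) y ≤ t)
    dsimp only [f]
    gcongr
  have hfcont : Continuous f := by fun_prop
  have hLUB := (Metric.isGLB_infDist hP).isLUB_of_tendsto hf (hP.image _)
    (hfcont.tendsto _ |>.mono_left nhdsWithin_le_nhds)
  rw [Set.image_image, Set.image_eq_range] at hLUB
  simpa only [inner_sub_half_mul_norm_sq_eq_sub_dist_sq hμ.ne'] using hLUB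

theorem smoothedSupport_eq_sub_infDist_sq (hP : P.Nonempty) (hμ : 0 < μ) (z : E) :
    smoothedSupport P μ z = ‖z‖ ^ 2 / (2 * μ) - μ / 2 * Metric.infDist (μ⁻¹ • z) P ^ 2 := by
  have := hP.to_subtype
  exact (isLUB_range_inner_sub_half_mul_norm_sq hP hμ z).ciSup_eq

theorem continuous_smoothedSupport (hP : P.Nonempty) (hμ : 0 < μ) :
    Continuous (smoothedSupport P μ) := by
  rw [funext (smoothedSupport_eq_sub_infDist_sq hP hμ)]
  fun_prop

theorem smoothedSupport_eq_biSup (h0 : 0 ∈ P) (hμ : 0 < μ) (z : E) :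
    smoothedSupport P μ z = ⨆ y ∈ P, (⟪z, y⟫ - μ / 2 * ‖y‖ ^ 2) := by
  have hbdd : BddAbove (Set.range fun y : P ↦ ⟪z, (y : E)⟫ - μ / 2 * ‖(y : E)‖ ^ 2) :=
    (isLUB_range_inner_sub_half_mul_norm_sq ⟨0, h0⟩ hμ z).bddAbove
  refine ciSup_subtype_fun (f := fun y ↦ ⟪z, y⟫ - μ / 2 * ‖y‖ ^ 2) hbdd ?_
  simpa using le_ciSup hbdd ⟨0, h0⟩

end SmoothedSupport

section DCDecomposition

variable {E α ι : Type*} [NormedAddCommGroup E] [InnerProductSpace ℝ E] [Fintype α] [Fintype ι]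

/-- The smooth function `g_μ` in the decomposition `g_μ - h_μ` of the objective, with data points
`a` and centers `X`. -/
def dcMinuend [LinearOrder ι] (a : α → E) (lam μ : ℝ) (X : PiLp 2 fun _ : ι ↦ E) : ℝ :=
  1 / (2 * μ) * ∑ i, ∑ ℓ, ‖X ℓ - a i‖ ^ 2 +
    lam * Fintype.card α / 2 * ∑ s, ∑ t, if s < t then ‖X s - X t‖ ^ 2 else 0

theorem contDiff_dcMinuend [LinearOrder ι] {m : WithTop ℕ∞} (a : α → E) (lam μ : ℝ) :
    ContDiff ℝ m (dcMinuend (ι := ι) a lam μ) := by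
  have hcoord (ℓ : ι) : ContDiff ℝ m fun X : PiLp 2 fun _ : ι ↦ E ↦ X ℓ := by fun_prop
  unfold dcMinuend
  refine (contDiff_const.mul ?_).add (contDiff_const.mul ?_)
  · exact .sum fun i _ ↦ .sum fun ℓ _ ↦ ((hcoord ℓ).sub contDiff_const).norm_sq ℝ
  · refine .sum fun s _ ↦ .sum fun t _ ↦ ?_
    split_ifs
    · exact ((hcoord s).sub (hcoord t)).norm_sq ℝ
    · exact contDiff_const

/-- The function `h_μ` in the decomposition `g_μ - h_μ` of the objective, with data points `a` and
centers `X`; the set `P` plays the role of the polar `F°`. -/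
def dcSubtrahend [DecidableEq ι] (P : Set E) (a : α → E) (μ : ℝ) (X : PiLp 2 fun _ : ι ↦ E) : ℝ :=
  μ / 2 * ∑ i, ∑ ℓ, Metric.infDist (μ⁻¹ • (X ℓ - a i)) P ^ 2 +
    ∑ i, ⨆ r, ∑ ℓ ∈ Finset.univ.erase r, smoothedSupport P μ (X ℓ - a i)

theorem continuous_dcSubtrahend [DecidableEq ι] [Nonempty ι] {P : Set E} {μ : ℝ}
    (hP : P.Nonempty) (hμ : 0 < μ) (a : α → E) :
    Continuous (dcSubtrahend (ι := ι) P a μ) := by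
  have hρ := continuous_smoothedSupport hP hμ
  unfold dcSubtrahend
  simp only [← Finset.sup'_univ_eq_ciSup]
  fun_prop

end DCDecomposition

theorem dca_accumulation_point_critical_general {E α ι : Type*} [NormedAddCommGroup E]
    [InnerProductSpace ℝ E] [CompleteSpace E] [Fintype α] [Fintype ι] [LinearOrder ι] [Nonempty ι]
    {P : Set E} (hP : P.Nonempty) (a : α → E) (lam : ℝ) {μ : ℝ} (hμ : 0 < μ)
    {X Y : ℕ → PiLp 2 fun _ : ι ↦ E}
    (hsub : ∀ t, IsSubgradientAt (dcSubtrahend P a μ) (Y t) (X t))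
    (hgstep : ∀ t, gradient (dcMinuend a lam μ) (X (t + 1)) = Y t)
    {Xstar : PiLp 2 fun _ : ι ↦ E} {l : Filter ℕ} [l.NeBot] (hconv : Tendsto X l (𝓝 Xstar))
    (hstep : Tendsto (fun t ↦ ‖X (t + 1) - X t‖) l (𝓝 0)) :
    IsSubgradientAt (dcSubtrahend P a μ) (gradient (dcMinuend a lam μ) Xstar) Xstar :=
  isSubgradientAt_gradient_of_tendsto
    (continuous_gradient_of_contDiff (contDiff_dcMinuend a lam μ)).continuousAt
    (continuous_dcSubtrahend hP hμ a).continuousAt.lowerSemicontinuousAt hconv hstep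
    (.of_forall fun t ↦ (hgstep t).symm ▸ hsub t)

/-- Accumulation points of the DCA iteration are critical points: if
`Y^{(t)} ∈ ∂h_μ(X^{(t)})`, `∇g_μ(X^{(t+1)}) = Y^{(t)}`, and along a subsequence
`X^{(t_j)} → X*` with `‖X^{(t_j+1)} − X^{(t_j)}‖ → 0`, then `∇g_μ(X*) ∈ ∂h_μ(X*)`. -/
theorem dca_accumulation_point_critical
    (d n k : ℕ) (hn : 0 < n) (hk : 0 < k)
    (F : Set (EuclideanSpace ℝ (Fin d)))
    (hFcomp : IsCompact F) (hFconv : Convex ℝ F)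
    (hF0 : (0 : EuclideanSpace ℝ (Fin d)) ∈ interior F)
    (polar : Set (EuclideanSpace ℝ (Fin d)))
    (hpolar : polar = {v : EuclideanSpace ℝ (Fin d) | ∀ x ∈ F, ⟪v, x⟫ ≤ 1})
    (a : Fin n → EuclideanSpace ℝ (Fin d))
    (lam μ : ℝ) (hlam : 0 < lam) (hμ : 0 < μ)
    (rhoMu : EuclideanSpace ℝ (Fin d) → ℝ)
    (hrhoMu : ∀ z : EuclideanSpace ℝ (Fin d),
      rhoMu z = ⨆ y ∈ polar, (⟪z, y⟫ - μ / 2 * ‖y‖ ^ 2))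
    (g h : PiLp 2 (fun _ : Fin k => EuclideanSpace ℝ (Fin d)) → ℝ)
    (hg : ∀ X : PiLp 2 (fun _ : Fin k => EuclideanSpace ℝ (Fin d)),
      g X = (1 / (2 * μ)) * ∑ i : Fin n, ∑ ℓ : Fin k, ‖X ℓ - a i‖ ^ 2
        + lam * n / 2 * ∑ s : Fin k, ∑ t : Fin k, (if s < t then ‖X s - X t‖ ^ 2 else 0))
    (hh : ∀ X : PiLp 2 (fun _ : Fin k => EuclideanSpace ℝ (Fin d)),
      h X = μ / 2 * ∑ i : Fin n, ∑ ℓ : Fin k,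
          (Metric.infDist (μ⁻¹ • (X ℓ - a i)) polar) ^ 2
        + ∑ i : Fin n, ⨆ r : Fin k, ∑ ℓ ∈ Finset.univ.erase r, rhoMu (X ℓ - a i))
    (X Y : ℕ → PiLp 2 (fun _ : Fin k => EuclideanSpace ℝ (Fin d)))
    (hsub : ∀ t : ℕ, ∀ Z : PiLp 2 (fun _ : Fin k => EuclideanSpace ℝ (Fin d)),
      h (X t) + ⟪Y t, Z - X t⟫ ≤ h Z)
    (hgstep : ∀ t : ℕ, gradient g (X (t + 1)) = Y t)
    (Xstar : PiLp 2 (fun _ : Fin k => EuclideanSpace ℝ (Fin d)))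
    (tj : ℕ → ℕ) (htj : StrictMono tj)
    (hconv : Filter.Tendsto (fun j => X (tj j)) Filter.atTop (nhds Xstar))
    (hstep : Filter.Tendsto (fun j => ‖X (tj j + 1) - X (tj j)‖) Filter.atTop (nhds 0)) :
    ∀ Z : PiLp 2 (fun _ : Fin k => EuclideanSpace ℝ (Fin d)),
      h Xstar + ⟪gradient g Xstar, Z - Xstar⟫ ≤ h Z := by
  have : Nonempty (Fin k) := ⟨0, hk⟩
  have h0 : 0 ∈ polar := by simp [hpolar]
  obtain rfl : rhoMu = smoothedSupport polar μ :=
    funext fun z ↦ (hrhoMu z).trans (smoothedSupport_eq_biSup h0 hμ z).symm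
  obtain rfl : g = dcMinuend a lam μ := funext fun _ ↦ by rw [hg, dcMinuend, Fintype.card_fin]
  obtain rfl : h = dcSubtrahend polar a μ := funext hh
  exact dca_accumulation_point_critical_general (l := map tj atTop) ⟨0, h0⟩ a lam hμ hsub hgstep
    (tendsto_map'_iff.2 hconv) (tendsto_map'_iff.2 hstep)
end
end
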